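/- Transfer theorem (the inductive step used to construct a path dependent twin): let S and T be standard Borel spaces, let (W, Z) be a random element of S × T on a probability space (Ω, P), and let W' be a random element of S on a probability space (Ω', P') with the same law as W, together with a random variable U on (Ω', P') that is uniformly distributed on [0,1] and independent of W'. Then there exists a Borel measurable function g : S × ℝ → T such that the pair (W', g(W', U)) has the same joint law on S × T as (W, Z). -/

import Mathlib

open MeasureTheory ProbabilityTheory

/-!
Disintegrate the law of `(W, Z)` along the law of `W` and realise the resulting Markov kernel as the
pushforward of the uniform measure under a measurable map `g s`. Then `(s, u) ↦ (s, g s u)` carries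
the product of the law of `W` and the uniform measure, which is the joint law of `(W', U)`, to the
law of `(W, Z)`.
-/

lemma measurePreserving_projIcc {α : Type*} [LinearOrder α] [TopologicalSpace α] [OrderTopology α]
    [MeasurableSpace α] [BorelSpace α] (μ : Measure α) {a b : α} (h : a ≤ b) :
    MeasurePreserving (Set.projIcc a b h) (μ.restrict (Set.Icc a b))
      (μ.comap ((↑) : Set.Icc a b → α)) where
  measurable := continuous_projIcc.measurable
  map_eq := by
    have hproj : Set.projIcc a b h ∘ ((↑) : Set.Icc a b → α) = id :=
      funext (Set.projIcc_val h)
    rw [← map_comap_subtype_coe measurableSet_Icc,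
      Measure.map_map continuous_projIcc.measurable measurable_subtype_coe, hproj, Measure.map_id]

lemma exists_measurable_map_restrict_Icc_eq {α β : Type*} [MeasurableSpace α] [MeasurableSpace β]
    [StandardBorelSpace β] [Nonempty β] (κ : Kernel α β) [IsMarkovKernel κ] :
    ∃ g : α → ℝ → β, Measurable g.uncurry ∧
      ∀ a, (volume.restrict (Set.Icc (0 : ℝ) 1)).map (g a) = κ a := by
  obtain ⟨f, hf, hfκ⟩ := κ.exists_measurable_map_eq_unitInterval
  have hproj := measurePreserving_projIcc (volume : Measure ℝ) zero_le_one
  refine ⟨fun a u => f a (Set.projIcc 0 1 zero_le_one u),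
    hf.comp (measurable_fst.prodMk (hproj.measurable.comp measurable_snd)), fun a => ?_⟩
  have hfa : MeasurePreserving (f a) volume (κ a) := ⟨hf.of_uncurry_left, hfκ a⟩
  exact (hfa.comp hproj).map_eq

lemma map_prod_eq_compProd {α β γ : Type*} [MeasurableSpace α] [MeasurableSpace β]
    [MeasurableSpace γ] (μ : Measure α) [SFinite μ] (ν : Measure β) [SFinite ν]
    (κ : Kernel α γ) [IsSFiniteKernel κ] {f : α → β → γ} (hf : Measurable f.uncurry)
    (hκ : ∀ a, ν.map (f a) = κ a) :
    (μ.prod ν).map (fun p => (p.1, f p.1 p.2)) = μ ⊗ₘ κ := by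
  have hgraph : Measurable fun p : α × β => (p.1, f p.1 p.2) := measurable_fst.prodMk hf
  ext s hs
  calc (μ.prod ν).map (fun p => (p.1, f p.1 p.2)) s
      = ∫⁻ a, ν (f a ⁻¹' (Prod.mk a ⁻¹' s)) ∂μ := by
        rw [Measure.map_apply hgraph hs, Measure.prod_apply (hgraph hs)]
        rfl
    _ = ∫⁻ a, κ a (Prod.mk a ⁻¹' s) ∂μ := by
        simp_rw [← hκ, Measure.map_apply hf.of_uncurry_left (measurable_prodMk_left hs)]
    _ = (μ ⊗ₘ κ) s := (Measure.compProd_apply hs).symm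

lemma exists_measurable_map_fst_prod_restrict_Icc_eq {α β : Type*} [MeasurableSpace α]
    [MeasurableSpace β] [StandardBorelSpace β] [Nonempty β] (ρ : Measure (α × β))
    [IsFiniteMeasure ρ] :
    ∃ g : α → ℝ → β, Measurable g.uncurry ∧
      (ρ.fst.prod (volume.restrict (Set.Icc (0 : ℝ) 1))).map (fun p => (p.1, g p.1 p.2)) = ρ := by
  obtain ⟨g, hg, hgρ⟩ := exists_measurable_map_restrict_Icc_eq ρ.condKernel
  exact ⟨g, hg, (map_prod_eq_compProd _ _ _ hg hgρ).trans (ρ.disintegrate ρ.condKernel)⟩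

theorem transfer_theorem_general
    {Ω Ω' S T : Type*} [MeasurableSpace Ω] [MeasurableSpace Ω']
    [MeasurableSpace S] [MeasurableSpace T] [StandardBorelSpace T]
    (P : Measure Ω) [IsProbabilityMeasure P] (P' : Measure Ω') [IsProbabilityMeasure P']
    {W : Ω → S} {Z : Ω → T} (hZ : AEMeasurable Z P)
    {W' : Ω' → S} {U : Ω' → ℝ} (hW' : AEMeasurable W' P') (hU : AEMeasurable U P')
    (hWlaw : P'.map W' = P.map W)
    (hUlaw : P'.map U = volume.restrict (Set.Icc (0 : ℝ) 1))
    (hIndep : IndepFun W' U P') :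
    ∃ g : S → ℝ → T, Measurable g.uncurry ∧
      P'.map (fun ω => (W' ω, g (W' ω) (U ω))) = P.map (fun ω => (W ω, Z ω)) := by
  have : Nonempty T := (nonempty_of_isProbabilityMeasure P).map Z
  obtain ⟨g, hg, hglaw⟩ :=
    exists_measurable_map_fst_prod_restrict_Icc_eq (P.map fun ω => (W ω, Z ω))
  have hgraph : Measurable fun p : S × ℝ => (p.1, g p.1 p.2) := measurable_fst.prodMk hg
  refine ⟨g, hg, ?_⟩
  calc P'.map (fun ω => (W' ω, g (W' ω) (U ω)))
      = (P'.map fun ω => (W' ω, U ω)).map (fun p => (p.1, g p.1 p.2)) :=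
        (AEMeasurable.map_map_of_aemeasurable hgraph.aemeasurable (hW'.prodMk hU)).symm
    _ = ((P.map fun ω => (W ω, Z ω)).fst.prod (volume.restrict (Set.Icc (0 : ℝ) 1))).map
          (fun p => (p.1, g p.1 p.2)) := by
        rw [hIndep.map_prod_eq_prod_map_map hW' hU, hWlaw, hUlaw, Measure.fst_map_prodMk₀ hZ]
    _ = P.map (fun ω => (W ω, Z ω)) := hglaw

/-- transfer theorem: let `S`, `T` be standard Borel spaces, `(W, Z)` a random
element of `S × T` on `(Ω, P)`, and `W'` a random element of `S` on `(Ω', P')` with the same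
law as `W`, together with `U` uniform on `[0,1]` and independent of `W'`. Then there is a
Borel measurable `g : S × ℝ → T` such that `(W', g(W', U))` has the same joint law as
`(W, Z)`. -/
theorem transfer_theorem
    {Ω Ω' S T : Type*} [MeasurableSpace Ω] [MeasurableSpace Ω']
    [MeasurableSpace S] [StandardBorelSpace S] [MeasurableSpace T] [StandardBorelSpace T]
    (P : Measure Ω) [IsProbabilityMeasure P] (P' : Measure Ω') [IsProbabilityMeasure P']
    (W : Ω → S) (Z : Ω → T) (hW : Measurable W) (hZ : Measurable Z)
    (W' : Ω' → S) (U : Ω' → ℝ) (hW' : Measurable W') (hU : Measurable U)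
    (hWlaw : P'.map W' = P.map W)
    (hUlaw : P'.map U = volume.restrict (Set.Icc (0 : ℝ) 1))
    (hIndep : IndepFun W' U P') :
    ∃ g : S → ℝ → T, Measurable (fun p : S × ℝ => g p.1 p.2) ∧
      P'.map (fun ω => (W' ω, g (W' ω) (U ω))) = P.map (fun ω => (W ω, Z ω)) :=
  transfer_theorem_general P P' hZ.aemeasurable hW'.aemeasurable hU.aemeasurable
    hWlaw hUlaw hIndep
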